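/- For 0 < b ≤ a and d ∈ {2,3}, the integral ∫_{p ≥ a, q ≥ b} e^{−(p+q)} (∫_0^{min(p,q)} e^r / (pq − r²)^{d/2} dr) dq dp is finite. In particular, for d = 3, ∫_{q ≥ a} ∫_{a ≤ p < q} e^{−q} (∫_0^p dr/(pq − r²)^{3/2}) dp dq = 2 ∫_a^∞ (e^{−q}/q) · arccos(√(a/q)) dq. -/

import Mathlib

open Set MeasureTheory

/-!
Write `m = min p q` and `M = max p q`, so that `p * q = m * M` and `|p - q| = M - m`. On `[0, m]`
we have `m * M - r ^ 2 ≥ m * (M - r)`, hence for `1 < σ < 2` the integral of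
`(m * M - r ^ 2) ^ (-σ)` is `O((M - m) ^ (1 - σ))`, which is integrable across the diagonal.
Smaller exponents only cost a power of `M`. The bound `e ^ r ≤ e ^ m` turns the exponential weight
into `e ^ (-M)`, which absorbs that power and still leaves a constant multiple of
`e ^ (-|q| / 4) * e ^ (-|p - q| / 4)`. The resulting majorant is the integrand of a convolution of
two integrable functions.
-/

lemma integrable_abs_rpow_mul_exp_neg_mul_abs {s c : ℝ} (hs : -1 < s) (hc : 0 < c) :
    Integrable fun u : ℝ => |u| ^ s * Real.exp (-c * |u|) := by
  have h := (integrable_fun_norm_addHaar (volume : Measure ℝ)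
    (f := fun y => y ^ s * Real.exp (-c * y))).2
  simp only [Real.norm_eq_abs, Module.finrank_self, Nat.sub_self, pow_zero, one_smul] at h
  refine h ?_
  simpa only [Real.rpow_one] using integrableOn_rpow_mul_exp_neg_mul_rpow hs one_pos hc

lemma integrable_exp_neg_mul_abs_sub_rpow_mul_exp_neg {s c : ℝ} (hs : -1 < s) (hc : 0 < c) :
    Integrable fun x : ℝ × ℝ =>
      Real.exp (-c * |x.2|) * (|x.1 - x.2| ^ s * Real.exp (-c * |x.1 - x.2|)) := by
  have hexp : Integrable fun u : ℝ => Real.exp (-c * |u|) := by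
    simpa only [Real.rpow_zero, one_mul] using
      integrable_abs_rpow_mul_exp_neg_mul_abs (by norm_num : (-1 : ℝ) < 0) hc
  exact hexp.convolution_integrand (ContinuousLinearMap.mul ℝ ℝ)
    (integrable_abs_rpow_mul_exp_neg_mul_abs hs hc)

lemma ae_fst_ne_snd {α : Type*} [MeasurableSpace α] [MeasurableEq α] (μ ν : Measure α)
    [SFinite ν] [NullSingletonClass ν] : ∀ᵐ x : α × α ∂μ.prod ν, x.1 ≠ x.2 := by
  refine (Measure.ae_prod_iff_ae_ae measurableSet_diagonal.compl).2 (.of_forall fun p => ?_)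
  filter_upwards [Measure.ae_ne ν p] with q hq using hq.symm

lemma stronglyMeasurable_intervalIntegral {α E : Type*} [MeasurableSpace α]
    [NormedAddCommGroup E] [NormedSpace ℝ E] {μ : Measure ℝ} [SFinite μ]
    {F : α → ℝ → E} {f g : α → ℝ}
    (hF : StronglyMeasurable (Function.uncurry F)) (hf : Measurable f) (hg : Measurable g) :
    StronglyMeasurable fun x => ∫ r in f x..g x, F x r ∂μ := by
  have integral_Ioc {u v : α → ℝ} (hu : Measurable u) (hv : Measurable v) :
      StronglyMeasurable fun x => ∫ r in Ioc (u x) (v x), F x r ∂μ := by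
    have hS : MeasurableSet {y : α × ℝ | y.2 ∈ Ioc (u y.1) (v y.1)} :=
      (measurableSet_lt (hu.comp measurable_fst) measurable_snd).inter
        (measurableSet_le measurable_snd (hv.comp measurable_fst))
    simp only [← integral_indicator measurableSet_Ioc]
    exact (hF.indicator hS).integral_prod_right' (ν := μ)
  exact (integral_Ioc hf hg).sub (integral_Ioc hg hf)

section KernelBound

variable {s σ m M r : ℝ}

lemma mul_sub_le_mul_sub_sq (hr : r ∈ Icc 0 m) : m * (M - r) ≤ m * M - r ^ 2 := by
  nlinarith [mul_nonneg hr.1 (sub_nonneg.2 hr.2)]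

lemma exp_div_mul_sub_sq_rpow_le (hsσ : s ≤ σ) (hσ : 0 ≤ σ) (hm : 0 < m) (hmM : m < M)
    (hr : r ∈ Icc 0 m) :
    Real.exp r / (m * M - r ^ 2) ^ s
      ≤ Real.exp m * M ^ (2 * (σ - s)) * (m ^ (-σ) * (M - r) ^ (-σ)) := by
  have hM : 0 < M := hm.trans hmM
  have hMr : 0 < M - r := sub_pos.2 (hr.2.trans_lt hmM)
  have hlower := mul_sub_le_mul_sub_sq (M := M) hr
  have hpos : 0 < m * M - r ^ 2 := (mul_pos hm hMr).trans_le hlower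
  have hupper : m * M - r ^ 2 ≤ M ^ 2 := by nlinarith [sq_nonneg r]
  calc Real.exp r / (m * M - r ^ 2) ^ s
      = Real.exp r * (m * M - r ^ 2) ^ (σ - s) * (m * M - r ^ 2) ^ (-σ) := by
        rw [mul_assoc, ← Real.rpow_add hpos, div_eq_mul_inv, ← Real.rpow_neg hpos.le]
        ring_nf
    _ ≤ Real.exp m * (M ^ 2) ^ (σ - s) * (m * (M - r)) ^ (-σ) := by
        have hfactor := Real.rpow_le_rpow hpos.le hupper (sub_nonneg.2 hsσ)
        have hkernel := Real.rpow_le_rpow_of_nonpos (mul_pos hm hMr) hlower (neg_nonpos.2 hσ)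
        gcongr
        exact hr.2
    _ = Real.exp m * M ^ (2 * (σ - s)) * (m ^ (-σ) * (M - r) ^ (-σ)) := by
        rw [Real.mul_rpow hm.le hMr.le, Real.rpow_mul hM.le, Real.rpow_two]

lemma integral_sub_rpow_neg_le (hσ : 1 < σ) (hm : 0 ≤ m) (hmM : m < M) :
    ∫ r in (0 : ℝ)..m, (M - r) ^ (-σ) ≤ (M - m) ^ (1 - σ) / (σ - 1) := by
  have hzero : (0 : ℝ) ∉ uIcc (M - m) (M - 0) := by
    rw [uIcc_of_le (by linarith)]
    exact fun h => absurd h.1 (by linarith)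
  rw [intervalIntegral.integral_comp_sub_left (fun t => t ^ (-σ)),
    integral_rpow (.inr ⟨by linarith, hzero⟩), sub_zero, neg_add_eq_sub,
    ← neg_sub σ 1, div_neg, ← neg_div, neg_sub]
  have hM : 0 ≤ M ^ (-(σ - 1)) := Real.rpow_nonneg (hm.trans hmM.le) _
  exact div_le_div_of_nonneg_right (sub_le_self _ hM) (sub_pos.2 hσ).le

lemma norm_integral_exp_div_rpow_le (hsσ : s ≤ σ) (hσ : 1 < σ) (hm : 0 < m) (hmM : m < M) :
    ‖∫ r in (0 : ℝ)..m, Real.exp r / (m * M - r ^ 2) ^ s‖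
      ≤ Real.exp m * M ^ (2 * (σ - s)) * (m ^ (-σ) * ((M - m) ^ (1 - σ) / (σ - 1))) := by
  have hM : 0 < M := hm.trans hmM
  have hcont : ContinuousOn (fun r => (M - r) ^ (-σ)) (uIcc 0 m) := by
    refine ContinuousOn.rpow_const (by fun_prop) fun r hr => .inl (sub_pos.2 ?_).ne'
    rw [uIcc_of_le hm.le] at hr
    exact hr.2.trans_lt hmM
  calc ‖∫ r in (0 : ℝ)..m, Real.exp r / (m * M - r ^ 2) ^ s‖
      ≤ ∫ r in (0 : ℝ)..m,
          Real.exp m * M ^ (2 * (σ - s)) * (m ^ (-σ) * (M - r) ^ (-σ)) := by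
        refine intervalIntegral.norm_integral_le_of_norm_le hm.le (.of_forall fun r hr => ?_)
          ((hcont.intervalIntegrable.const_mul _).const_mul _)
        have hr' : r ∈ Icc 0 m := Ioc_subset_Icc_self hr
        have hnonneg : 0 ≤ m * M - r ^ 2 :=
          (mul_nonneg hm.le (by linarith [hr.2])).trans (mul_sub_le_mul_sub_sq hr')
        rw [Real.norm_of_nonneg (by positivity)]
        exact exp_div_mul_sub_sq_rpow_le hsσ (by linarith) hm hmM hr'
    _ ≤ _ := by
        rw [intervalIntegral.integral_const_mul, intervalIntegral.integral_const_mul]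
        gcongr
        exact integral_sub_rpow_neg_le hσ hm.le hmM

end KernelBound

lemma rpow_mul_exp_neg_le {k x : ℝ} (hk : 0 ≤ k) (hx : 0 ≤ x) :
    x ^ k * Real.exp (-x) ≤ (2 * k) ^ k * Real.exp (-(x / 2)) := by
  have h := ProbabilityTheory.rpow_abs_le_mul_exp_abs x hk (one_half_pos (α := ℝ)).ne'
  rw [abs_of_nonneg hx, abs_of_pos one_half_pos, div_div_eq_mul_div, div_one, mul_comm k] at h
  calc x ^ k * Real.exp (-x)
      ≤ (2 * k) ^ k * Real.exp (1 / 2 * x) * Real.exp (-x) := by gcongr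
    _ = (2 * k) ^ k * Real.exp (-(x / 2)) := by
        rw [mul_assoc, ← Real.exp_add]
        ring_nf

lemma exp_neg_half_max_le {p q : ℝ} (hp : 0 ≤ p) (hq : 0 ≤ q) :
    Real.exp (-(max p q / 2)) ≤ Real.exp (-(1 / 4) * |q|) * Real.exp (-(1 / 4) * |p - q|) := by
  rw [← Real.exp_add, Real.exp_le_exp, abs_of_nonneg hq, ← max_sub_min_eq_abs']
  linarith [le_max_right p q, le_min hp hq]

lemma norm_exp_neg_add_mul_integral_le {s σ c m M : ℝ} (hsσ : s ≤ σ) (hσ : 1 < σ) (hc : 0 < c)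
    (hcm : c ≤ m) (hmM : m < M) :
    ‖Real.exp (-(m + M)) * ∫ r in (0 : ℝ)..m, Real.exp r / (m * M - r ^ 2) ^ s‖
      ≤ c ^ (-σ) * ((M - m) ^ (1 - σ) / (σ - 1)) *
        ((2 * (2 * (σ - s))) ^ (2 * (σ - s)) * Real.exp (-(M / 2))) := by
  have hm : 0 < m := hc.trans_le hcm
  have hM : 0 < M := hm.trans hmM
  have hdist : 0 ≤ (M - m) ^ (1 - σ) / (σ - 1) :=
    div_nonneg (Real.rpow_nonneg (sub_pos.2 hmM).le _) (sub_pos.2 hσ).le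
  have hmc : m ^ (-σ) ≤ c ^ (-σ) := Real.rpow_le_rpow_of_nonpos hc hcm (by linarith)
  rw [norm_mul, Real.norm_of_nonneg (Real.exp_pos _).le]
  calc Real.exp (-(m + M)) * ‖∫ r in (0 : ℝ)..m, Real.exp r / (m * M - r ^ 2) ^ s‖
      ≤ Real.exp (-(m + M)) * (Real.exp m * M ^ (2 * (σ - s)) *
          (m ^ (-σ) * ((M - m) ^ (1 - σ) / (σ - 1)))) := by
        gcongr
        exact norm_integral_exp_div_rpow_le hsσ hσ hm hmM
    _ = m ^ (-σ) * ((M - m) ^ (1 - σ) / (σ - 1)) * (M ^ (2 * (σ - s)) * Real.exp (-M)) := by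
        rw [neg_add, Real.exp_add, Real.exp_neg m]
        field_simp
    _ ≤ _ := mul_le_mul (mul_le_mul_of_nonneg_right hmc hdist)
        (rpow_mul_exp_neg_le (by linarith) hM.le) (by positivity) (by positivity)

lemma norm_exp_neg_add_mul_integral_min_le {s σ c p q : ℝ} (hsσ : s ≤ σ) (hσ : 1 < σ) (hc : 0 < c)
    (hp : c ≤ p) (hq : c ≤ q) (hpq : p ≠ q) :
    ‖Real.exp (-(p + q)) * ∫ r in (0 : ℝ)..min p q, Real.exp r / (p * q - r ^ 2) ^ s‖
      ≤ c ^ (-σ) / (σ - 1) * (2 * (2 * (σ - s))) ^ (2 * (σ - s)) *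
        (Real.exp (-(1 / 4) * |q|) *
          (|p - q| ^ (1 - σ) * Real.exp (-(1 / 4) * |p - q|))) := by
  have hbound := norm_exp_neg_add_mul_integral_le hsσ hσ hc (le_min hp hq) (min_lt_max.2 hpq)
  rw [min_mul_max, min_add_max, max_sub_min_eq_abs'] at hbound
  have hcoeff : 0 ≤ c ^ (-σ) * (|p - q| ^ (1 - σ) / (σ - 1)) :=
    mul_nonneg (by positivity) (div_nonneg (by positivity) (sub_pos.2 hσ).le)
  have hconst : 0 ≤ (2 * (2 * (σ - s))) ^ (2 * (σ - s)) := Real.rpow_nonneg (by linarith) _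
  have hdecay := exp_neg_half_max_le (hc.le.trans hp) (hc.le.trans hq)
  calc _ ≤ _ := hbound
    _ ≤ c ^ (-σ) * (|p - q| ^ (1 - σ) / (σ - 1)) * ((2 * (2 * (σ - s))) ^ (2 * (σ - s)) *
          (Real.exp (-(1 / 4) * |q|) * Real.exp (-(1 / 4) * |p - q|))) :=
        mul_le_mul_of_nonneg_left (mul_le_mul_of_nonneg_left hdecay hconst) hcoeff
    _ = _ := by ring

theorem integrableOn_exp_neg_mul_integral_exp_div_rpow {a b s : ℝ} (ha : 0 < a) (hb : 0 < b)
    (hs : s < 2) :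
    IntegrableOn (fun x : ℝ × ℝ =>
        Real.exp (-(x.1 + x.2)) *
          ∫ r in (0 : ℝ)..min x.1 x.2, Real.exp r / (x.1 * x.2 - r ^ 2) ^ s)
      {x : ℝ × ℝ | a ≤ x.1 ∧ b ≤ x.2} := by
  obtain ⟨σ, hσ, hσ2⟩ := exists_between (max_lt hs one_lt_two)
  have hS : MeasurableSet {x : ℝ × ℝ | a ≤ x.1 ∧ b ≤ x.2} :=
    (measurableSet_le measurable_const measurable_fst).inter
      (measurableSet_le measurable_const measurable_snd)
  have hmeas : StronglyMeasurable fun x : ℝ × ℝ =>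
      ∫ r in (0 : ℝ)..min x.1 x.2, Real.exp r / (x.1 * x.2 - r ^ 2) ^ s :=
    stronglyMeasurable_intervalIntegral
      (F := fun (x : ℝ × ℝ) r => Real.exp r / (x.1 * x.2 - r ^ 2) ^ s)
      (Measurable.stronglyMeasurable (by fun_prop)) measurable_const
      (measurable_fst.min measurable_snd)
  have hdominating := integrable_exp_neg_mul_abs_sub_rpow_mul_exp_neg
    (by linarith : -1 < 1 - σ) (by norm_num : (0 : ℝ) < 1 / 4)
  have hoff_diagonal := (ae_restrict_mem hS).and (ae_restrict_of_ae (ae_fst_ne_snd volume volume))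
  refine Integrable.mono' ?_
    ((Continuous.aestronglyMeasurable (by fun_prop)).mul hmeas.aestronglyMeasurable)
    (hoff_diagonal.mono fun x ⟨hx, hne⟩ =>
      norm_exp_neg_add_mul_integral_min_le ((le_max_left s 1).trans hσ.le)
        ((le_max_right s 1).trans_lt hσ) (lt_min ha hb) ((min_le_left a b).trans hx.1)
        ((min_le_right a b).trans hx.2) hne)
  exact (hdominating.const_mul _).integrableOn

lemma hasDerivAt_div_mul_sqrt_sub_sq {c r : ℝ} (h : r ^ 2 < c) :
    HasDerivAt (fun r => r / (c * √(c - r ^ 2))) (1 / (c - r ^ 2) ^ ((3 : ℝ) / 2)) r := by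
  have hpos : 0 < c - r ^ 2 := sub_pos.2 h
  have hc : 0 < c := (sq_nonneg r).trans_lt h
  have hsub : HasDerivAt (fun r : ℝ => c - r ^ 2) (-(2 * r)) r := by
    simpa using (hasDerivAt_pow 2 r).const_sub c
  refine ((hasDerivAt_id' r).div ((hsub.sqrt hpos.ne').const_mul c) (by positivity)).congr_deriv ?_
  rw [Real.rpow_div_two_eq_sqrt 3 hpos.le, Real.rpow_ofNat]
  have hroot : √(c - r ^ 2) ^ 2 = c - r ^ 2 := Real.sq_sqrt hpos.le
  field_simp
  linear_combination hroot

lemma integral_one_div_sub_sq_rpow_three_halves {c x : ℝ} (hx : x ^ 2 < c) :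
    ∫ r in (0 : ℝ)..x, 1 / (c - r ^ 2) ^ ((3 : ℝ) / 2) = x / (c * √(c - x ^ 2)) := by
  have hsq : ∀ r ∈ uIcc 0 x, r ^ 2 < c := fun r hr =>
    (sq_le_sq.2 (by simpa using abs_sub_left_of_mem_uIcc hr)).trans_lt hx
  have hcont : ContinuousOn (fun r : ℝ => 1 / (c - r ^ 2) ^ ((3 : ℝ) / 2)) (uIcc 0 x) :=
    continuousOn_const.div
      (ContinuousOn.rpow_const (by fun_prop) fun r hr => .inl (sub_pos.2 (hsq r hr)).ne')
      fun r hr => (Real.rpow_pos_of_pos (sub_pos.2 (hsq r hr)) _).ne'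
  rw [intervalIntegral.integral_eq_sub_of_hasDerivAt
    (fun r hr => hasDerivAt_div_mul_sqrt_sub_sq (hsq r hr)) hcont.intervalIntegrable,
    zero_div, sub_zero]

lemma integral_one_div_mul_sub_sq_rpow_three_halves {p q : ℝ} (hp : 0 < p) (hpq : p < q) :
    ∫ r in (0 : ℝ)..p, 1 / (p * q - r ^ 2) ^ ((3 : ℝ) / 2) = 1 / q * (1 / √(p * (q - p))) := by
  rw [integral_one_div_sub_sq_rpow_three_halves (by nlinarith), mul_assoc,
    div_mul_cancel_left₀ hp.ne', show p * q - p ^ 2 = p * (q - p) by ring,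
    one_div_mul_one_div, one_div]

lemma hasDerivAt_arccos_sqrt_div {p q : ℝ} (hp : 0 < p) (hpq : p < q) :
    HasDerivAt (fun p => -2 * Real.arccos √(p / q)) (1 / √(p * (q - p))) p := by
  have hq : 0 < q := hp.trans hpq
  have hqp : 0 < q - p := sub_pos.2 hpq
  have hratio : 0 < p / q := div_pos hp hq
  have hroot : √(p / q) < 1 := by
    rw [Real.sqrt_lt' one_pos, one_pow]
    exact (div_lt_one hq).2 hpq
  have hsqrt := ((hasDerivAt_id' p).div_const q).sqrt hratio.ne'
  have harccos := Real.hasDerivAt_arccos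
    (by linarith [Real.sqrt_nonneg (p / q)] : √(p / q) ≠ -1) hroot.ne
  refine ((harccos.comp p hsqrt).const_mul (-2)).congr_deriv ?_
  rw [Real.sq_sqrt hratio.le, one_sub_div hq.ne', Real.sqrt_div hqp.le, Real.sqrt_div hp.le,
    Real.sqrt_mul hp.le]
  field_simp
  rw [Real.sq_sqrt hq.le]

lemma integral_one_div_sqrt_mul_sub {a q : ℝ} (ha : 0 ≤ a) (haq : a < q) :
    ∫ p in a..q, 1 / √(p * (q - p)) = 2 * Real.arccos √(a / q) := by
  have hcont : ContinuousOn (fun p => -2 * Real.arccos √(p / q)) (Icc a q) := by fun_prop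
  have hderiv : ∀ p ∈ Ioo a q, HasDerivAt (fun p => -2 * Real.arccos √(p / q))
      (1 / √(p * (q - p))) p :=
    fun p hp => hasDerivAt_arccos_sqrt_div (ha.trans_lt hp.1) hp.2
  have hint : IntervalIntegrable (fun p => 1 / √(p * (q - p))) volume a q :=
    (intervalIntegrable_iff_integrableOn_Ioc_of_le haq.le).2
      (intervalIntegral.integrableOn_deriv_of_nonneg hcont hderiv fun _ _ => by positivity)
  rw [intervalIntegral.integral_eq_sub_of_hasDerivAt_of_le haq.le hcont hderiv hint,
    div_self (ha.trans_lt haq).ne', Real.sqrt_one, Real.arccos_one]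
  ring

theorem integral_exp_neg_mul_integral_one_div_rpow {a : ℝ} (ha : 0 < a) :
    ∫ q in Ioi a, ∫ p in Ico a q,
        Real.exp (-q) * ∫ r in (0 : ℝ)..p, 1 / (p * q - r ^ 2) ^ ((3 : ℝ) / 2)
      = 2 * ∫ q in Ioi a, Real.exp (-q) / q * Real.arccos √(a / q) := by
  rw [← integral_const_mul]
  refine setIntegral_congr_fun measurableSet_Ioi fun q (hq : a < q) => ?_
  calc ∫ p in Ico a q, Real.exp (-q) * ∫ r in (0 : ℝ)..p, 1 / (p * q - r ^ 2) ^ ((3 : ℝ) / 2)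
      = ∫ p in Ico a q, Real.exp (-q) * (1 / q * (1 / √(p * (q - p)))) :=
        setIntegral_congr_fun measurableSet_Ico fun p hp => by
          simp only [integral_one_div_mul_sub_sq_rpow_three_halves (ha.trans_le hp.1) hp.2]
    _ = Real.exp (-q) * (1 / q * (2 * Real.arccos √(a / q))) := by
        rw [integral_const_mul, integral_const_mul, integral_Ico_eq_integral_Ioc,
          ← intervalIntegral.integral_of_le hq.le, integral_one_div_sqrt_mul_sub ha.le hq]
    _ = 2 * (Real.exp (-q) / q * Real.arccos √(a / q)) := by ring

theorem second_moment_case3_general {a b : ℝ} (ha : 0 < a) (hb : 0 < b) :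
    (∀ d : ℝ, d < 4 →
      IntegrableOn (fun x : ℝ × ℝ =>
          Real.exp (-(x.1 + x.2)) *
            ∫ r in (0:ℝ)..(min x.1 x.2), Real.exp r / (x.1 * x.2 - r^2) ^ (d/2))
        {x : ℝ × ℝ | a ≤ x.1 ∧ b ≤ x.2}) ∧
    (∫ q in Ioi a, ∫ p in Ico a q,
        Real.exp (-q) * ∫ r in (0:ℝ)..p, 1 / (p * q - r^2) ^ ((3:ℝ)/2))
      = 2 * ∫ q in Ioi a, Real.exp (-q) / q * Real.arccos (Real.sqrt (a/q)) :=
  ⟨fun _ hd => integrableOn_exp_neg_mul_integral_exp_div_rpow ha hb (by linarith),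
    integral_exp_neg_mul_integral_one_div_rpow ha⟩

theorem second_moment_case3 (a b : ℝ) (hb : 0 < b) (hba : b ≤ a) :
    (∀ d : ℕ, d = 2 ∨ d = 3 →
      IntegrableOn (fun x : ℝ × ℝ =>
          Real.exp (-(x.1 + x.2)) *
            ∫ r in (0:ℝ)..(min x.1 x.2), Real.exp r / (x.1 * x.2 - r^2) ^ ((d:ℝ)/2))
        {x : ℝ × ℝ | a ≤ x.1 ∧ b ≤ x.2}) ∧
    (∫ q in Ioi a, ∫ p in Ico a q,
        Real.exp (-q) * ∫ r in (0:ℝ)..p, 1 / (p * q - r^2) ^ ((3:ℝ)/2))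
      = 2 * ∫ q in Ioi a, Real.exp (-q) / q * Real.arccos (Real.sqrt (a/q)) :=
  (second_moment_case3_general (hb.trans_le hba) hb).imp_left fun hint d hd =>
    hint d (by rcases hd with rfl | rfl <;> norm_num)
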